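/- arXiv:1801.07197 — 2 statements merged into one kernel-verified Lean document; each statement's English description precedes it below -/
import Mathlib

section
/- Let k be a positive integer and let Γ be a residually finite group. If the left-normed commutator word w_k = [x_1, …, x_k] is a probabilistic identity of Γ, then Γ satisfies an identity; more precisely, there exists a positive integer c such that the left-normed commutator [g_1^c, g_2^c, …, g_k^c] equals 1 for all g_1, …, g_k ∈ Γ. -/
open scoped Classical

/-- The commutator `[x, y] = x⁻¹y⁻¹xy` (the convention used in the paper). -/
def pcomm {G : Type*} [Group G] (x y : G) : G := x⁻¹ * y⁻¹ * x * y

/-- The left-normed commutator word `w_k = [x₁, …, x_k] ∈ F_k`,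
defined inductively by `w₁ = x₁` and `w_{j+1} = [w_j, x_{j+1}]`. -/
def commWord : (k : ℕ) → FreeGroup (Fin k)
  | 0 => 1
  | 1 => FreeGroup.of 0
  | (k + 2) =>
      pcomm (FreeGroup.map Fin.castSucc (commWord (k + 1))) (FreeGroup.of (Fin.last (k + 1)))

/-- The left-normed commutator `[g₁, …, g_k]` of group elements. -/
def commElt {G : Type*} [Group G] : {k : ℕ} → (Fin k → G) → G
  | 0, _ => 1
  | 1, f => f 0
  | (_ + 2), f => pcomm (commElt (fun i => f i.castSucc)) (f (Fin.last _))

/-- The word `[x₁², x₂, …, x_k] ∈ F_k`, defined inductively by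
`u₁ = x₁²` and `u_{j+1} = [u_j, x_{j+1}]`. -/
def sqCommWord : (k : ℕ) → FreeGroup (Fin k)
  | 0 => 1
  | 1 => FreeGroup.of 0 ^ 2
  | (k + 2) =>
      pcomm (FreeGroup.map Fin.castSucc (sqCommWord (k + 1))) (FreeGroup.of (Fin.last (k + 1)))

/-- `P_{G,w}(g) = |w_G⁻¹(g)| / |G|^k`, the probability that the word map of `w`
takes the value `g` on a uniformly random `k`-tuple. -/
noncomputable def wordProb {k : ℕ} {G : Type*} [Group G] (w : FreeGroup (Fin k)) (g : G) : ℝ :=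
  (Nat.card {f : Fin k → G // FreeGroup.lift f w = g} : ℝ) / (Nat.card G : ℝ) ^ k

/-- A group is residually finite if every nontrivial element is excluded by
some normal subgroup of finite index. -/
def ResiduallyFinite (Γ : Type*) [Group Γ] : Prop :=
  ∀ g : Γ, g ≠ 1 → ∃ Δ : Subgroup Γ, Δ.Normal ∧ Δ.FiniteIndex ∧ g ∉ Δ

/-- A word `w ≠ 1` is a probabilistic identity of `Γ` if for some `ε > 0` every
finite quotient `H` of `Γ` satisfies `P_{H,w}(1) ≥ ε`. -/
def IsProbIdentity {k : ℕ} (Γ : Type*) [Group Γ] (w : FreeGroup (Fin k)) : Prop :=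
  w ≠ 1 ∧ ∃ ε : ℝ, 0 < ε ∧
    ∀ (Δ : Subgroup Γ) [Δ.Normal], Δ.FiniteIndex → ε ≤ wordProb w (1 : Γ ⧸ Δ)

/-- `G(H)`: the intersection of the kernels of all homomorphisms from `G` to `H`. -/
def kerInt (G H : Type*) [Group G] [Group H] : Subgroup G := ⨅ φ : G →* H, φ.ker

/-- A word `1 ≠ w ∈ F_k` is good if for every `ε > 0` there is a word `1 ≠ v ∈ F_m`,
depending only on `w` and `ε`, which is an identity of every finite group `G`
satisfying `P_{G,w}(g) ≥ ε` for some `g ∈ G`. -/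
def IsGood {k : ℕ} (w : FreeGroup (Fin k)) : Prop :=
  w ≠ 1 ∧ ∀ ε : ℝ, 0 < ε → ∃ (m : ℕ) (v : FreeGroup (Fin m)), v ≠ 1 ∧
    ∀ (G : Type) [Group G] [Finite G],
      (∃ g : G, ε ≤ wordProb w g) → ∀ f : Fin m → G, FreeGroup.lift f v = 1

/-!
Fix `N` normal in a finite group `G` and suppose that `[g₁, …, g_{k+1}] ∈ N` with probability at
least `ε`. Then with probability at least `ε / 2` the element `x = [g₁, …, g_k]` commutes modulo `N`
with a proportion at least `ε / 2` of `G`. The centralizer of such an `x` modulo `N` has index at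
most `2 / ε`, so it contains all `m`-th powers for `m = ⌈2 / ε⌉!`. Hence `[g₁, …, g_k]` lies with
probability at least `ε / 2` in the normal subgroup of elements commuting modulo `N` with all `m`-th
powers, and induction on `k` applies to that subgroup. The exponent obtained depends only on `k` and
`ε`, so it serves all finite quotients of a residually finite group at once.
-/

open scoped BigOperators

/-- The proportion of elements of a finite type satisfying `p`, that is, the probability of `p` for
the uniform distribution; it is `0` when the type is empty or infinite. -/
noncomputable def proportion {α : Type*} (p : α → Prop) : ℝ :=
  (Nat.card {a // p a} : ℝ) / Nat.card α

section Proportion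

variable {α β : Type*}

theorem proportion_le_one (p : α → Prop) : proportion p ≤ 1 := by
  cases finite_or_infinite α
  · exact div_le_one_of_le₀ (mod_cast Finite.card_subtype_le p) (Nat.cast_nonneg _)
  · simp [proportion]

theorem proportion_mono [Finite α] {p q : α → Prop} (h : ∀ a, p a → q a) :
    proportion p ≤ proportion q :=
  div_le_div_of_nonneg_right (mod_cast Nat.card_le_card_of_injective (Subtype.map id h)
    (Subtype.map_injective h Function.injective_id)) (Nat.cast_nonneg _)

theorem proportion_comp_equiv (e : α ≃ β) (p : β → Prop) :
    proportion (fun a => p (e a)) = proportion p := by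
  rw [proportion, proportion, Nat.card_congr e,
    Nat.card_congr (e.subtypeEquiv (p := fun a => p (e a)) (q := p) fun _ => Iff.rfl)]

theorem proportion_eq_expect [Fintype α] (p : α → Prop) :
    proportion p = 𝔼 a, if p a then 1 else 0 := by
  rw [proportion, Fintype.expect_eq_sum_div_card, Finset.sum_boole, Nat.card_eq_fintype_card,
    Nat.card_eq_fintype_card, Fintype.card_subtype]

theorem proportion_prod [Fintype α] [Finite β] (R : α → β → Prop) :
    proportion (fun p : α × β => R p.1 p.2) = 𝔼 a, proportion (R a) := by
  have := Fintype.ofFinite β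
  simp only [proportion_eq_expect, ← Finset.univ_product_univ, Finset.expect_product]

theorem le_proportion_le_proportion_of_add_le [Finite α] [Nonempty α] [Finite β]
    (R : α → β → Prop) {s t : ℝ} (ht : 0 ≤ t)
    (h : s + t ≤ proportion (fun p : α × β => R p.1 p.2)) :
    s ≤ proportion (fun a => t ≤ proportion (R a)) := by
  have := Fintype.ofFinite α
  have pointwise (a : α) :
      proportion (R a) ≤ (if t ≤ proportion (R a) then 1 else 0) + t := by
    split_ifs with ha
    · linarith [proportion_le_one (R a)]
    · linarith
  have averaged : s + t ≤ proportion (fun a => t ≤ proportion (R a)) + t :=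
    calc s + t ≤ 𝔼 a, proportion (R a) := h.trans_eq (proportion_prod R)
      _ ≤ 𝔼 a, ((if t ≤ proportion (R a) then 1 else 0) + t) :=
        Finset.expect_le_expect fun a _ => pointwise a
      _ = proportion (fun a => t ≤ proportion (R a)) + t := by
        rw [Finset.expect_add_distrib, Fintype.expect_const, proportion_eq_expect]
  exact le_of_add_le_add_right averaged

end Proportion

section Index

variable {G : Type*} [Group G] [Finite G] (H : Subgroup G)

theorem proportion_mem_subgroup : proportion (· ∈ H) = (H.index : ℝ)⁻¹ := by
  have card_ne : (Nat.card H : ℝ) ≠ 0 := mod_cast Nat.card_pos.ne'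
  rw [proportion, ← H.card_mul_index, Nat.cast_mul, div_mul_cancel_left₀ card_ne]

theorem pow_factorial_mem_of_le_proportion {ε : ℝ} (hε : 0 < ε)
    (h : ε ≤ proportion (· ∈ H)) (y : G) : y ^ ⌈ε⁻¹⌉₊.factorial ∈ H := by
  have index_le : H.index ≤ ⌈ε⁻¹⌉₊ := by
    rw [proportion_mem_subgroup] at h
    exact_mod_cast (le_inv_of_le_inv₀ hε h).trans (Nat.le_ceil _)
  exact H.pow_mem_of_index_ne_zero_of_dvd Subgroup.FiniteIndex.index_ne_zero y
    fun m hm hle => Nat.dvd_factorial hm (hle.trans index_le)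

end Index

section Commutators

variable {G H : Type*} [Group G] [Group H]

theorem map_pcomm (φ : G →* H) (x y : G) : φ (pcomm x y) = pcomm (φ x) (φ y) := by
  simp only [pcomm, map_mul, map_inv]

theorem pcomm_eq_one_iff_commute {x y : G} : pcomm x y = 1 ↔ Commute x y := by
  rw [pcomm, mul_assoc, ← mul_inv_rev, inv_mul_eq_one, eq_comm, commute_iff_eq]

theorem pcomm_mem_iff_commute (N : Subgroup G) [N.Normal] {x y : G} :
    pcomm x y ∈ N ↔ Commute (x : G ⧸ N) (y : G ⧸ N) := by
  rw [← QuotientGroup.eq_one_iff, ← pcomm_eq_one_iff_commute]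
  rfl

theorem pcomm_mem_comm (N : Subgroup G) [N.Normal] {x y : G} :
    pcomm x y ∈ N ↔ pcomm y x ∈ N := by
  simp only [pcomm_mem_iff_commute, Commute.symm_iff]

theorem map_commElt (φ : G →* H) : ∀ {k : ℕ} (f : Fin k → G),
    φ (commElt f) = commElt fun i => φ (f i)
  | 0, _ => map_one φ
  | 1, _ => rfl
  | _ + 2, f => by simp only [commElt, map_pcomm, map_commElt φ fun i => f i.castSucc]

theorem commElt_snoc {k : ℕ} (f : Fin (k + 1) → G) (y : G) :
    commElt (Fin.snoc f y : Fin (k + 2) → G) = pcomm (commElt f) y := by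
  simp only [commElt, Fin.snoc_castSucc, Fin.snoc_last]

theorem commWord_eq_commElt : ∀ k : ℕ, commWord k = commElt (FreeGroup.of : Fin k → _)
  | 0 => rfl
  | 1 => rfl
  | k + 2 => by
    simp only [commWord, commElt, commWord_eq_commElt (k + 1), map_commElt, FreeGroup.map.of]

theorem lift_commWord {k : ℕ} (f : Fin k → G) : FreeGroup.lift f (commWord k) = commElt f := by
  simp only [commWord_eq_commElt, map_commElt, FreeGroup.lift_apply_of]

theorem wordProb_eq_proportion {k : ℕ} (w : FreeGroup (Fin k)) (g : G) :
    wordProb w g = proportion fun f : Fin k → G => FreeGroup.lift f w = g := by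
  simp only [wordProb, proportion, Nat.card_fun, Nat.card_fin, Nat.cast_pow]

theorem proportion_commElt_succ (N : Subgroup G) (k : ℕ) :
    proportion (fun f : Fin (k + 2) → G => commElt f ∈ N) =
      proportion fun p : (Fin (k + 1) → G) × G => pcomm (commElt p.1) p.2 ∈ N := by
  let e : (Fin (k + 1) → G) × G ≃ (Fin (k + 2) → G) :=
    (Equiv.prodComm _ _).trans (Fin.snocEquiv fun _ => G)
  rw [← proportion_comp_equiv e]
  exact congrArg proportion (funext fun p => congrArg (· ∈ N) (commElt_snoc p.1 p.2))

end Commutators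

/-- The subgroup of elements commuting modulo `N` with every element of `S`. -/
def centralizerMod {G : Type*} [Group G] (N : Subgroup G) [N.Normal] (S : Set G) : Subgroup G :=
  (Subgroup.centralizer (QuotientGroup.mk' N '' S)).comap (QuotientGroup.mk' N)

section CentralizerMod

variable {G : Type*} [Group G] (N : Subgroup G) [N.Normal]

theorem mem_centralizerMod {S : Set G} {x : G} :
    x ∈ centralizerMod N S ↔ ∀ y ∈ S, pcomm x y ∈ N := by
  simp only [centralizerMod, Subgroup.mem_comap, Subgroup.mem_centralizer_iff,
    Set.forall_mem_image, pcomm_mem_iff_commute, commute_iff_eq, QuotientGroup.mk'_apply, eq_comm]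

theorem centralizerMod_normal {S : Set G} (hS : ∀ s ∈ S, ∀ g : G, g * s * g⁻¹ ∈ S) :
    (centralizerMod N S).Normal where
  conj_mem x hx g := by
    rw [mem_centralizerMod] at hx ⊢
    intro y hy
    have conj_pcomm : pcomm (g * x * g⁻¹) y = g * pcomm x (g⁻¹ * y * g⁻¹⁻¹) * g⁻¹ := by
      simp only [pcomm]
      group
    rw [conj_pcomm]
    exact ‹N.Normal›.conj_mem _ (hx _ (hS y hy g⁻¹)) g

instance centralizerMod_range_pow_normal (m : ℕ) :
    (centralizerMod N (Set.range fun y : G => y ^ m)).Normal :=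
  centralizerMod_normal N <| Set.forall_mem_range.2 fun y g => ⟨g * y * g⁻¹, conj_pow⟩

theorem mem_centralizerMod_range_pow_factorial [Finite G] {ε : ℝ} (hε : 0 < ε) {x : G}
    (hx : ε ≤ proportion fun y => pcomm x y ∈ N) :
    x ∈ centralizerMod N (Set.range fun y : G => y ^ ⌈ε⁻¹⌉₊.factorial) := by
  have mem_iff (y : G) : y ∈ centralizerMod N {x} ↔ pcomm x y ∈ N := by
    simp only [mem_centralizerMod, Set.mem_singleton_iff, forall_eq, pcomm_mem_comm N (x := y)]
  simp only [← mem_iff] at hx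
  rw [mem_centralizerMod, Set.forall_mem_range]
  exact fun y => (mem_iff _).1 (pow_factorial_mem_of_le_proportion _ hε hx y)

theorem le_proportion_commElt_mem_centralizerMod [Finite G] {k : ℕ} {ε : ℝ} (hε : 0 < ε)
    (h : ε ≤ proportion fun f : Fin (k + 2) → G => commElt f ∈ N) :
    ε / 2 ≤ proportion fun f : Fin (k + 1) → G =>
      commElt f ∈ centralizerMod N (Set.range fun y : G => y ^ ⌈(ε / 2)⁻¹⌉₊.factorial) := by
  rw [proportion_commElt_succ, ← add_halves ε] at h
  exact (le_proportion_le_proportion_of_add_le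
    (fun (f : Fin (k + 1) → G) y => pcomm (commElt f) y ∈ N) (half_pos hε).le h).trans <|
    proportion_mono fun _ hf => mem_centralizerMod_range_pow_factorial N (half_pos hε) hf

end CentralizerMod

theorem exists_forall_commElt_pow_mem.{u} (k : ℕ) {ε : ℝ} (hε : 0 < ε) :
    ∃ c : ℕ, 0 < c ∧ ∀ (G : Type u) [Group G] [Finite G] (N : Subgroup G) [N.Normal],
      ε ≤ proportion (fun f : Fin (k + 1) → G => commElt f ∈ N) →
        ∀ g : Fin (k + 1) → G, commElt (fun i => g i ^ c) ∈ N := by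
  induction k generalizing ε with
  | zero =>
    refine ⟨_, Nat.factorial_pos ⌈ε⁻¹⌉₊, fun G _ _ N _ h g => ?_⟩
    have h' : ε ≤ proportion (· ∈ N) :=
      h.trans_eq (proportion_comp_equiv (Equiv.funUnique (Fin 1) G) (· ∈ N))
    exact pow_factorial_mem_of_le_proportion N hε h' (g 0)
  | succ k ih =>
    obtain ⟨c, hc, hcN⟩ := ih (half_pos hε)
    let m := ⌈(ε / 2)⁻¹⌉₊.factorial
    refine ⟨m * c, Nat.mul_pos (Nat.factorial_pos _) hc, fun G _ _ N _ h g => ?_⟩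
    have init_mem : commElt (fun i : Fin (k + 1) => (g i.castSucc ^ m) ^ c) ∈
        centralizerMod N (Set.range fun y : G => y ^ m) :=
      hcN G _ (le_proportion_commElt_mem_centralizerMod N hε h) fun i => g i.castSucc ^ m
    have pcomm_mem := (mem_centralizerMod N).1 init_mem _ ⟨g (Fin.last _) ^ c, rfl⟩
    simpa only [commElt, pow_mul, pow_right_comm _ c m] using pcomm_mem

theorem exists_forall_commElt_pow_eq_one.{u} (k : ℕ) {ε : ℝ} (hε : 0 < ε) :
    ∃ c : ℕ, 0 < c ∧ ∀ (G : Type u) [Group G] [Finite G],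
      ε ≤ wordProb (commWord (k + 1)) (1 : G) →
        ∀ g : Fin (k + 1) → G, commElt (fun i => g i ^ c) = 1 := by
  obtain ⟨c, hc, hcN⟩ := exists_forall_commElt_pow_mem k hε
  refine ⟨c, hc, fun G _ _ h g => Subgroup.mem_bot.1 (hcN G ⊥ ?_ g)⟩
  simpa only [wordProb_eq_proportion, lift_commWord, Subgroup.mem_bot] using h

theorem ResiduallyFinite.eq_one_of_forall_mk_eq_one {Γ : Type*} [Group Γ]
    (hΓ : ResiduallyFinite Γ) {g : Γ}
    (h : ∀ (Δ : Subgroup Γ) [Δ.Normal], Δ.FiniteIndex → (g : Γ ⧸ Δ) = 1) : g = 1 := by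
  by_contra hg
  obtain ⟨Δ, _, hfin, hgΔ⟩ := hΓ g hg
  exact hgΔ ((QuotientGroup.eq_one_iff g).1 (h Δ hfin))

/-- A residually finite group in which `w_k` is a probabilistic
identity satisfies the identity `[x₁^c, …, x_k^c] = 1` for some `c > 0`. -/
theorem stmt6 (k : ℕ) (hk : 1 ≤ k) (Γ : Type*) [Group Γ] (hrf : ResiduallyFinite Γ)
    (h : IsProbIdentity Γ (commWord k)) :
    ∃ c : ℕ, 0 < c ∧ ∀ g : Fin k → Γ, commElt (fun i => g i ^ c) = 1 := by
  obtain ⟨k, rfl⟩ := Nat.exists_eq_add_of_le' hk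
  obtain ⟨-, ε, hε, hprob⟩ := h
  obtain ⟨c, hc, hquot⟩ := exists_forall_commElt_pow_eq_one k hε
  refine ⟨c, hc, fun g => hrf.eq_one_of_forall_mk_eq_one fun Δ _ hfin => ?_⟩
  calc QuotientGroup.mk' Δ (commElt fun i => g i ^ c)
      = commElt fun i => (g i : Γ ⧸ Δ) ^ c := map_commElt _ _
    _ = 1 := hquot (Γ ⧸ Δ) (hprob Δ hfin) _
end

section
/- Let w ∈ F_k be a good word and let v ∈ F_m be any nontrivial word. Regard w and v as words in disjoint sets of variables, so that the products wv and vw are words in F_{k+m}. Then wv and vw are good words. -/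
open scoped Classical

/-!
Once the variables of `v₁` and `v₂` are fixed at a tuple `f`, the equation `v₁ w v₂ = g` becomes
`w = v₁(f)⁻¹ g v₂(f)⁻¹`. Hence `P_{G,v₁wv₂}(g)` is the average over `f` of the probabilities
`P_{G,w}(v₁(f)⁻¹ g v₂(f)⁻¹)`, and one of these is at least as large as the average. So the identity
that goodness of `w` provides for `ε` also serves `v₁ w v₂`; the cases `v₁ = 1` and `v₂ = 1` are
the products `wv` and `vw`.
-/

open scoped BigOperators

/-- The word `v₁ w v₂ ∈ F_{k+m}`, where `w` uses the first `k` variables while `v₁` and `v₂` share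
the last `m`. It treats `wv` and `vw` uniformly. -/
def sandwichWord {k m : ℕ} (v₁ : FreeGroup (Fin m)) (w : FreeGroup (Fin k))
    (v₂ : FreeGroup (Fin m)) : FreeGroup (Fin (k + m)) :=
  FreeGroup.map (Fin.natAdd k) v₁ * FreeGroup.map (Fin.castAdd m) w *
    FreeGroup.map (Fin.natAdd k) v₂

theorem lift_map_apply {α β G : Type*} [Group G] (f : β → G) (e : α → β) (v : FreeGroup α) :
    FreeGroup.lift f (FreeGroup.map e v) = FreeGroup.lift (f ∘ e) v :=
  FreeGroup.lift_unique ((FreeGroup.lift f).comp (FreeGroup.map e)) fun _ => by simp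

theorem lift_one_apply {α G : Type*} [Group G] (v : FreeGroup α) :
    FreeGroup.lift (1 : α → G) v = 1 :=
  (FreeGroup.lift_unique 1 fun _ => rfl).symm

theorem card_subtype_eq_sum_append {k m : ℕ} {α : Type*} [Fintype α]
    (p : (Fin (k + m) → α) → Prop) :
    Nat.card {f // p f} = ∑ f₂ : Fin m → α, Nat.card {f₁ : Fin k → α // p (Fin.append f₁ f₂)} := by
  have e : {f // p f} ≃ Σ f₂ : Fin m → α, {f₁ : Fin k → α // p (Fin.append f₁ f₂)} :=
    (((Equiv.prodComm _ _).trans (Fin.appendEquiv k m)).subtypeEquivOfSubtype.symm).trans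
      (Equiv.subtypeProdEquivSigmaSubtype fun f₂ f₁ => p (Fin.append f₁ f₂))
  rw [Nat.card_congr e, Nat.card_sigma]

section SandwichWord

variable {k m : ℕ} (v₁ v₂ : FreeGroup (Fin m))

theorem lift_append_sandwichWord {G : Type*} [Group G] (w : FreeGroup (Fin k))
    (f₁ : Fin k → G) (f₂ : Fin m → G) :
    FreeGroup.lift (Fin.append f₁ f₂) (sandwichWord v₁ w v₂) =
      FreeGroup.lift f₂ v₁ * FreeGroup.lift f₁ w * FreeGroup.lift f₂ v₂ := by
  have left : Fin.append f₁ f₂ ∘ Fin.castAdd m = f₁ := funext (Fin.append_left f₁ f₂)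
  have right : Fin.append f₁ f₂ ∘ Fin.natAdd k = f₂ := funext (Fin.append_right f₁ f₂)
  simp only [sandwichWord, map_mul, lift_map_apply, left, right]

theorem sandwichWord_ne_one {w : FreeGroup (Fin k)} (hw : w ≠ 1) : sandwichWord v₁ w v₂ ≠ 1 := by
  intro h
  -- Setting the variables of `v₁` and `v₂` to `1` retracts `v₁ w v₂` onto `w`.
  have retract := lift_append_sandwichWord v₁ v₂ w FreeGroup.of 1
  rw [h, map_one, lift_one_apply, lift_one_apply, one_mul, mul_one, FreeGroup.lift_of_apply]
    at retract
  exact hw retract.symm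

theorem wordProb_sandwichWord_eq_expect {G : Type*} [Group G] [Fintype G]
    (w : FreeGroup (Fin k)) (g : G) :
    wordProb (sandwichWord v₁ w v₂) g =
      𝔼 f : Fin m → G, wordProb w ((FreeGroup.lift f v₁)⁻¹ * g * (FreeGroup.lift f v₂)⁻¹) := by
  have solve_for_w (f₁ : Fin k → G) (f₂ : Fin m → G) :
      FreeGroup.lift f₂ v₁ * FreeGroup.lift f₁ w * FreeGroup.lift f₂ v₂ = g ↔
        FreeGroup.lift f₁ w = (FreeGroup.lift f₂ v₁)⁻¹ * g * (FreeGroup.lift f₂ v₂)⁻¹ := by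
    rw [eq_mul_inv_iff_mul_eq, eq_inv_mul_iff_mul_eq, mul_assoc]
  simp only [wordProb, card_subtype_eq_sum_append, lift_append_sandwichWord, solve_for_w,
    Fintype.expect_eq_sum_div_card, ← Finset.sum_div, div_div]
  simp [pow_add]

theorem exists_wordProb_sandwichWord_le {G : Type*} [Group G] [Finite G]
    (w : FreeGroup (Fin k)) (g : G) :
    ∃ g' : G, wordProb (sandwichWord v₁ w v₂) g ≤ wordProb w g' := by
  have := Fintype.ofFinite G
  obtain ⟨f, -, hf⟩ := Finset.exists_le_of_le_expect Finset.univ_nonempty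
    (wordProb_sandwichWord_eq_expect v₁ v₂ w g).le
  exact ⟨_, hf⟩

theorem stmt15_general {w : FreeGroup (Fin k)} (hw : IsGood w) :
    IsGood (sandwichWord v₁ w v₂) := by
  refine ⟨sandwichWord_ne_one v₁ v₂ hw.1, fun ε hε => ?_⟩
  obtain ⟨n, u, hu, identity⟩ := hw.2 ε hε
  refine ⟨n, u, hu, fun G _ _ ⟨g, hg⟩ => ?_⟩
  obtain ⟨g', hg'⟩ := exists_wordProb_sandwichWord_le v₁ v₂ w g
  exact identity G ⟨g', hg.trans hg'⟩

end SandwichWord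

/-- If `w ∈ F_k` is good and `v ∈ F_m` is any nontrivial word in a
disjoint set of variables, then `wv` and `vw` (as words in `F_{k+m}`) are good. -/
theorem stmt15 (k m : ℕ) (w : FreeGroup (Fin k)) (v : FreeGroup (Fin m)) (hv : v ≠ 1)
    (hw : IsGood w) :
    IsGood (FreeGroup.map (Fin.castAdd m) w * FreeGroup.map (Fin.natAdd k) v) ∧
      IsGood (FreeGroup.map (Fin.natAdd k) v * FreeGroup.map (Fin.castAdd m) w) := by
  simpa only [sandwichWord, map_one, one_mul, mul_one] using
    And.intro (stmt15_general 1 v hw) (stmt15_general v 1 hw)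
end
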